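/- arXiv:2301.09208 — 2 statements merged into one kernel-verified Lean document; each statement's English description precedes it below -/
import Mathlib

section
/- Let A be an n×n matrix with nonnegative real entries satisfying Tr(A) ≤ 1, let d ∈ ℝ^n be a positive vector, and let c ∈ ℝ^n be a nonnegative vector with max_{1≤i,j≤n} (A*)_{ij}·c_j/d_i ≤ 1 (i.e. d^− A* c ≤ 1). Then a positive vector x ∈ ℝ^n satisfies A⊗x ⊕ c ≤ x ≤ d (entrywise) if and only if there exists a vector u ∈ ℝ^n with c_j ≤ u_j ≤ ( max_{1≤i≤n} (A*)_{ij}/d_i )^{−1} for all j, such that x = A* ⊗ u. -/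
/-!
The substance of the theorem is that `Tr(A) ≤ 1` makes the Kleene star absorb left multiplication
by `A`, that is, `A ⊗ A* ≤ A*` (`mul_mtStar_le`). Since `A*` is the maximum of the powers below
`n`, this amounts to `A^{⊗n} ≤ A*` (`mtPow_card_le_mtStar`). A positive entry of `A^{⊗n}` is the
weight of a walk with `n` edges; its `n + 1` vertices cannot be distinct, and the closed subwalk
between two equal ones has length in `[1, n]`, hence weight at most `1`. Deleting it gives a
shorter walk of at least the same weight.

Granted this, `A ⊗ x ≤ x` implies `A* ⊗ x ≤ x`, with equality because `A* ≥ I`, so a solution `x`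
is represented by `u = x`; conversely `A* ⊗ u` is a solution for every admissible `u`.
-/

open scoped BigOperators

/-- Max-times matrix product: `(A ⊗ B) i j = max_k A i k * B k j`. -/
noncomputable def mtMul {n : ℕ} (A B : Matrix (Fin n) (Fin n) ℝ) : Matrix (Fin n) (Fin n) ℝ :=
  fun i j => ⨆ k, A i k * B k j

/-- Max-times matrix power, with `A^{⊗0}` the identity matrix. -/
noncomputable def mtPow {n : ℕ} (A : Matrix (Fin n) (Fin n) ℝ) : ℕ → Matrix (Fin n) (Fin n) ℝ
  | 0 => 1
  | k + 1 => mtMul A (mtPow A k)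

/-- Tropical trace: `tr A = max_i A i i`. -/
noncomputable def mtTrace {n : ℕ} (A : Matrix (Fin n) (Fin n) ℝ) : ℝ :=
  ⨆ i, A i i

/-- The function `Tr(A) = max_{k=1,…,n} tr(A^{⊗k})`. -/
noncomputable def mtTr {n : ℕ} (A : Matrix (Fin n) (Fin n) ℝ) : ℝ :=
  ⨆ k ∈ Finset.Icc 1 n, mtTrace (mtPow A k)

/-- Kleene star: entrywise maximum of `I, A, A^{⊗2}, …, A^{⊗(n-1)}`. -/
noncomputable def mtStar {n : ℕ} (A : Matrix (Fin n) (Fin n) ℝ) : Matrix (Fin n) (Fin n) ℝ :=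
  fun i j => ⨆ k ∈ Finset.range n, mtPow A k i j

/-- Max-times matrix-vector product: `(A ⊗ x) i = max_j A i j * x j`. -/
noncomputable def mtVec {n : ℕ} (A : Matrix (Fin n) (Fin n) ℝ) (x : Fin n → ℝ) : Fin n → ℝ :=
  fun i => ⨆ j, A i j * x j

/-- The alternating product `A^{⊗v 0} ⊗ B ⊗ A^{⊗v 1} ⊗ B ⊗ ⋯ ⊗ B ⊗ A^{⊗v k}`
(with exactly `k` factors `B`). -/
noncomputable def mtChain {n : ℕ} (A B : Matrix (Fin n) (Fin n) ℝ) :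
    (k : ℕ) → (Fin (k + 1) → ℕ) → Matrix (Fin n) (Fin n) ℝ
  | 0, v => mtPow A (v 0)
  | k + 1, v => mtMul (mtPow A (v 0)) (mtMul B (mtChain A B k fun t => v t.succ))

/-- `F_{km}`: the entrywise maximum, over all tuples `(i_0,…,i_k)` of nonnegative integers
with `i_0 + ⋯ + i_k = m`, of the products `A^{⊗i_0} ⊗ B ⊗ A^{⊗i_1} ⊗ ⋯ ⊗ B ⊗ A^{⊗i_k}`. -/
noncomputable def mtF {n : ℕ} (A B : Matrix (Fin n) (Fin n) ℝ) (k m : ℕ) :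
    Matrix (Fin n) (Fin n) ℝ :=
  fun i j => ⨆ v : { v : Fin (k + 1) → ℕ // ∑ t, v t = m }, mtChain A B k v.1 i j

/-- `h^− M g = max_{i,j} M i j * g j / h i`. -/
noncomputable def mtHMG {n : ℕ} (h : Fin n → ℝ) (M : Matrix (Fin n) (Fin n) ℝ)
    (g : Fin n → ℝ) : ℝ :=
  ⨆ i, ⨆ j, M i j * g j / h i

section Suprema

variable {ι : Type*}

theorem le_iSup_of_finite [Finite ι] (f : ι → ℝ) (i : ι) : f i ≤ ⨆ i, f i :=
  le_ciSup (Set.finite_range f).bddAbove i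

/-- Nonnegativity makes the junk value `0` of the empty inner supremum harmless. -/
theorem le_biSup_finset (s : Finset ι) (f : ι → ℝ) (hf : ∀ i, 0 ≤ f i) {k : ι} (hk : k ∈ s) :
    f k ≤ ⨆ i ∈ s, f i := by
  have hbdd : BddAbove (Set.range fun i => ⨆ _ : i ∈ s, f i) := by
    refine ⟨∑ i ∈ s, f i, ?_⟩
    rintro _ ⟨i, rfl⟩
    exact Real.iSup_le (fun hi => Finset.single_le_sum (fun j _ => hf j) hi)
      (Finset.sum_nonneg fun j _ => hf j)
  have h := le_ciSup hbdd k
  simpa [hk] using h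

theorem biSup_finset_le (s : Finset ι) (f : ι → ℝ) {a : ℝ} (ha : 0 ≤ a)
    (h : ∀ i ∈ s, f i ≤ a) : ⨆ i ∈ s, f i ≤ a :=
  Real.iSup_le (fun i => Real.iSup_le (fun hi => h i hi) ha) ha

end Suprema

section Walks

variable {n : ℕ} {A : Matrix (Fin n) (Fin n) ℝ}

theorem mtPow_nonneg (hA : ∀ i j, 0 ≤ A i j) (k : ℕ) (i j : Fin n) : 0 ≤ mtPow A k i j := by
  induction k generalizing i j with
  | zero =>
    simp only [mtPow, Matrix.one_apply]
    split_ifs <;> norm_num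
  | succ k ih => exact Real.iSup_nonneg fun l => mul_nonneg (hA i l) (ih l j)

theorem mul_mtPow_le (k : ℕ) (i j l : Fin n) :
    A i l * mtPow A k l j ≤ mtPow A (k + 1) i j :=
  le_iSup_of_finite (fun l => A i l * mtPow A k l j) l

theorem mtPow_mul_le (hA : ∀ i j, 0 ≤ A i j) (a b : ℕ) (i l j : Fin n) :
    mtPow A a i l * mtPow A b l j ≤ mtPow A (a + b) i j := by
  induction a generalizing i with
  | zero =>
    rw [Nat.zero_add]
    by_cases h : i = l
    · subst h
      simp [mtPow]
    · simpa [mtPow, h] using mtPow_nonneg hA b i j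
  | succ a ih =>
    have : Nonempty (Fin n) := ⟨i⟩
    obtain ⟨m, hm⟩ := exists_eq_ciSup_of_finite (f := fun m => A i m * mtPow A a m l)
    have hm' : mtPow A (a + 1) i l = A i m * mtPow A a m l := hm.symm
    rw [hm', mul_assoc, Nat.add_right_comm]
    exact (mul_le_mul_of_nonneg_left (ih m) (hA i m)).trans (mul_mtPow_le _ _ _ _)

/-- The weight of a walk with `k` edges is at most the corresponding entry of `A^{⊗k}`. -/
theorem walk_le_mtPow (hA : ∀ i j, 0 ≤ A i j) (k : ℕ) (w : ℕ → Fin n) :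
    ∏ t ∈ Finset.range k, A (w t) (w (t + 1)) ≤ mtPow A k (w 0) (w k) := by
  induction k generalizing w with
  | zero => simp [mtPow]
  | succ k ih =>
    rw [Finset.prod_range_succ', mul_comm]
    exact (mul_le_mul_of_nonneg_left (ih fun t => w (t + 1)) (hA _ _)).trans
      (mul_mtPow_le _ _ _ _)

/-- A positive entry of `A^{⊗k}` is the weight of some walk with `k` edges. Positivity is needed
for `k = 0`, where the off-diagonal entries vanish and no walk exists. -/
theorem exists_walk (hA : ∀ i j, 0 ≤ A i j) (k : ℕ) (i j : Fin n) (h : 0 < mtPow A k i j) :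
    ∃ w : ℕ → Fin n, w 0 = i ∧ w k = j ∧
      mtPow A k i j = ∏ t ∈ Finset.range k, A (w t) (w (t + 1)) := by
  induction k generalizing i with
  | zero =>
    have hij : i = j := by
      by_contra hij
      simp [mtPow, hij] at h
    subst hij
    exact ⟨fun _ => i, rfl, rfl, by simp [mtPow]⟩
  | succ k ih =>
    have : Nonempty (Fin n) := ⟨i⟩
    obtain ⟨m, hm⟩ := exists_eq_ciSup_of_finite (f := fun m => A i m * mtPow A k m j)
    have hm' : mtPow A (k + 1) i j = A i m * mtPow A k m j := hm.symm
    rw [hm'] at h ⊢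
    obtain ⟨w, hw0, hwk, hw⟩ := ih m (pos_of_mul_pos_right h (hA i m))
    refine ⟨fun t => Nat.casesOn t i w, rfl, hwk, ?_⟩
    rw [Finset.prod_range_succ', hw, mul_comm]
    simp [hw0]

/-- `Tr(A) ≤ 1` bounds the weight of every closed walk of length between `1` and `n`. -/
theorem mtPow_diag_le_one (hA : ∀ i j, 0 ≤ A i j) (hTr : mtTr A ≤ 1) {k : ℕ}
    (hk : k ∈ Finset.Icc 1 n) (i : Fin n) : mtPow A k i i ≤ 1 :=
  (le_iSup_of_finite (fun i => mtPow A k i i) i).trans <|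
    (le_biSup_finset (Finset.Icc 1 n) (fun k => mtTrace (mtPow A k))
      (fun k => Real.iSup_nonneg fun i => mtPow_nonneg hA k i i) hk).trans hTr

end Walks

section Star

variable {n : ℕ} {A : Matrix (Fin n) (Fin n) ℝ}

theorem mtPow_le_mtStar (hA : ∀ i j, 0 ≤ A i j) {k : ℕ} (hk : k < n) (i j : Fin n) :
    mtPow A k i j ≤ mtStar A i j :=
  le_biSup_finset (Finset.range n) (fun k => mtPow A k i j) (fun k => mtPow_nonneg hA k i j)
    (Finset.mem_range.2 hk)

theorem mtStar_nonneg (hA : ∀ i j, 0 ≤ A i j) (i j : Fin n) : 0 ≤ mtStar A i j :=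
  (mtPow_nonneg hA 0 i j).trans (mtPow_le_mtStar hA i.pos i j)

theorem one_le_mtStar_diag (hA : ∀ i j, 0 ≤ A i j) (i : Fin n) : 1 ≤ mtStar A i i := by
  simpa [mtPow] using mtPow_le_mtStar hA i.pos i i

theorem exists_mtStar_eq (hA : ∀ i j, 0 ≤ A i j) (i j : Fin n) :
    ∃ k < n, mtStar A i j = mtPow A k i j := by
  obtain ⟨k, hk, hmax⟩ := Finset.exists_max_image (Finset.range n) (fun k => mtPow A k i j)
    ⟨0, Finset.mem_range.2 i.pos⟩
  have hk' := Finset.mem_range.1 hk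
  exact ⟨k, hk', le_antisymm (biSup_finset_le _ _ (mtPow_nonneg hA k i j) hmax)
    (mtPow_le_mtStar hA hk' i j)⟩

/-- A walk with `n` edges on `n` vertices contains a closed subwalk, which can be deleted without
decreasing the weight. -/
theorem mtPow_card_le_mtStar (hA : ∀ i j, 0 ≤ A i j) (hTr : mtTr A ≤ 1) (i j : Fin n) :
    mtPow A n i j ≤ mtStar A i j := by
  rcases (mtPow_nonneg hA n i j).eq_or_lt with h0 | hpos
  · exact h0 ▸ mtStar_nonneg hA i j
  obtain ⟨w, rfl, rfl, hw⟩ := exists_walk hA n i j hpos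
  obtain ⟨p, q, hpq, hqn, hwpq⟩ : ∃ p q, p < q ∧ q ≤ n ∧ w p = w q := by
    obtain ⟨p, q, hne, heq⟩ := Fintype.exists_ne_map_eq_of_card_lt
      (fun t : Fin (n + 1) => w t) (by simp)
    rcases lt_or_gt_of_ne hne with h | h
    · exact ⟨p, q, h, by omega, heq⟩
    · exact ⟨q, p, h, by omega, heq.symm⟩
  obtain ⟨r, rfl⟩ := Nat.exists_eq_add_of_lt hpq
  obtain ⟨s, hs⟩ := Nat.exists_eq_add_of_le hqn
  have hsplit : ∏ t ∈ Finset.range n, A (w t) (w (t + 1)) =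
      (∏ t ∈ Finset.range p, A (w t) (w (t + 1))) *
      (∏ t ∈ Finset.range (r + 1), A (w (p + t)) (w (p + t + 1))) *
      ∏ t ∈ Finset.range s, A (w (p + r + 1 + t)) (w (p + r + 1 + t + 1)) := by
    rw [show Finset.range n = Finset.range (p + (r + 1) + s) from
      congrArg Finset.range (by omega), Finset.prod_range_add, Finset.prod_range_add]
    rfl
  have h1 := walk_le_mtPow hA p w
  have h2 : ∏ t ∈ Finset.range (r + 1), A (w (p + t)) (w (p + t + 1)) ≤ 1 := by
    have h := walk_le_mtPow hA (r + 1) fun t => w (p + t)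
    have h' : mtPow A (r + 1) (w (p + 0)) (w (p + (r + 1))) ≤ 1 := by
      rw [Nat.add_zero, ← Nat.add_assoc, ← hwpq]
      exact mtPow_diag_le_one hA hTr (Finset.mem_Icc.2 ⟨by omega, by omega⟩) _
    exact h.trans h'
  have h3 : ∏ t ∈ Finset.range s, A (w (p + r + 1 + t)) (w (p + r + 1 + t + 1)) ≤
      mtPow A s (w p) (w n) := by
    have h := walk_le_mtPow hA s fun t => w (p + r + 1 + t)
    have e : w (p + r + 1 + s) = w n := congrArg w hs.symm
    simp only [Nat.add_zero, e, ← hwpq] at h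
    exact h
  rw [hw, hsplit]
  calc _ ≤ mtPow A p (w 0) (w p) * 1 * mtPow A s (w p) (w n) := by
        have hp : ∀ (m : ℕ) (v : ℕ → Fin n),
            0 ≤ ∏ t ∈ Finset.range m, A (v t) (v (t + 1)) :=
          fun m v => Finset.prod_nonneg fun t _ => hA _ _
        have hp1 := mtPow_nonneg hA p (w 0) (w p)
        exact mul_le_mul (mul_le_mul h1 h2 (hp (r + 1) fun t => w (p + t)) hp1) h3
          (hp s fun t => w (p + r + 1 + t)) (by simpa using hp1)
    _ ≤ mtPow A (p + s) (w 0) (w n) := by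
        rw [mul_one]
        exact mtPow_mul_le hA _ _ _ _ _
    _ ≤ _ := mtPow_le_mtStar hA (by omega) _ _

theorem mul_mtStar_le (hA : ∀ i j, 0 ≤ A i j) (hTr : mtTr A ≤ 1) (i l j : Fin n) :
    A i l * mtStar A l j ≤ mtStar A i j := by
  obtain ⟨k, hk, e⟩ := exists_mtStar_eq hA l j
  rw [e]
  refine (mul_mtPow_le k i j l).trans ?_
  rcases (Nat.succ_le_of_lt hk).lt_or_eq with h | h
  · exact mtPow_le_mtStar hA h i j
  · have h' : k + 1 = n := h
    rw [show mtPow A (k + 1) = mtPow A n from congrArg (mtPow A) h']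
    exact mtPow_card_le_mtStar hA hTr i j

/-- A subinvariant vector of `A` is subinvariant for `A*`. -/
theorem mtStar_mul_le (hA : ∀ i j, 0 ≤ A i j) {x : Fin n → ℝ} (hx : ∀ i, 0 ≤ x i)
    (h : ∀ i, mtVec A x i ≤ x i) (i j : Fin n) : mtStar A i j * x j ≤ x i := by
  have hpow : ∀ (k : ℕ) (i : Fin n), mtPow A k i j * x j ≤ x i := by
    intro k
    induction k with
    | zero =>
      intro i
      by_cases hij : i = j
      · subst hij
        simp [mtPow]
      · simpa [mtPow, hij] using hx i
    | succ k ih =>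
      intro i
      have : Nonempty (Fin n) := ⟨i⟩
      obtain ⟨m, hm⟩ := exists_eq_ciSup_of_finite (f := fun m => A i m * mtPow A k m j)
      have hm' : mtPow A (k + 1) i j = A i m * mtPow A k m j := hm.symm
      rw [hm', mul_assoc]
      exact (mul_le_mul_of_nonneg_left (ih m) (hA i m)).trans
        ((le_iSup_of_finite (fun m => A i m * x m) m).trans (h i))
  obtain ⟨k, -, e⟩ := exists_mtStar_eq hA i j
  exact e ▸ hpow k i

end Star

/-- If `Tr(A) ≤ 1` and `d^− A* c ≤ 1`, then the positive solutions of the double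
inequality `A ⊗ x ⊕ c ≤ x ≤ d` are exactly the vectors `x = A* ⊗ u` with
`c ≤ u ≤ (d^− A*)^−` entrywise. -/
theorem max_times_double_ineq_solution {n : ℕ} (A : Matrix (Fin n) (Fin n) ℝ)
    (hA : ∀ i j, 0 ≤ A i j) (hTr : mtTr A ≤ 1)
    (d : Fin n → ℝ) (hd : ∀ i, 0 < d i)
    (c : Fin n → ℝ) (hc : ∀ i, 0 ≤ c i)
    (hcd : (⨆ i, ⨆ j, mtStar A i j * c j / d i) ≤ 1)
    (x : Fin n → ℝ) (hx : ∀ i, 0 < x i) :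
    ((∀ i, mtVec A x i ≤ x i) ∧ (∀ i, c i ≤ x i) ∧ ∀ i, x i ≤ d i) ↔
      ∃ u : Fin n → ℝ,
        (∀ j, c j ≤ u j ∧ u j ≤ (⨆ i, mtStar A i j / d i)⁻¹) ∧
        ∀ i, x i = mtVec (mtStar A) u i := by
  constructor
  · rintro ⟨hAx, hcx, hxd⟩
    have hS := mtStar_mul_le hA (fun i => (hx i).le) hAx
    refine ⟨x, fun j => ⟨hcx j, ?_⟩, fun i => ?_⟩
    · have : Nonempty (Fin n) := ⟨j⟩
      have hpos : 0 < ⨆ i, mtStar A i j / d i :=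
        (div_pos (zero_lt_one.trans_le (one_le_mtStar_diag hA j)) (hd j)).trans_le
          (le_iSup_of_finite (fun i => mtStar A i j / d i) j)
      rw [le_inv_comm₀ (hx j) hpos]
      refine ciSup_le fun i => ?_
      rw [div_le_iff₀ (hd i), inv_mul_eq_div, le_div_iff₀ (hx j)]
      exact (hS i j).trans (hxd i)
    · have : Nonempty (Fin n) := ⟨i⟩
      exact le_antisymm
        ((le_mul_of_one_le_left (hx i).le (one_le_mtStar_diag hA i)).trans
          (le_iSup_of_finite (fun j => mtStar A i j * x j) i))
        (ciSup_le fun j => hS i j)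
  · rintro ⟨u, hu, hxu⟩
    have hu0 : ∀ j, 0 ≤ u j := fun j => (hc j).trans (hu j).1
    have hSx : ∀ i j, mtStar A i j * u j ≤ x i := fun i j =>
      (le_iSup_of_finite (fun j => mtStar A i j * u j) j).trans (hxu i).ge
    refine ⟨fun i => ?_, fun i => ?_, fun i => ?_⟩
    · have : Nonempty (Fin n) := ⟨i⟩
      refine ciSup_le fun l => ?_
      obtain ⟨j, hj⟩ := exists_eq_ciSup_of_finite (f := fun j => mtStar A l j * u j)
      have hj' : x l = mtStar A l j * u j := (hxu l).trans hj.symm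
      rw [hj', ← mul_assoc]
      exact (mul_le_mul_of_nonneg_right (mul_mtStar_le hA hTr i l j) (hu0 j)).trans (hSx i j)
    · exact (hu i).1.trans
        ((le_mul_of_one_le_left (hu0 i) (one_le_mtStar_diag hA i)).trans (hSx i i))
    · have : Nonempty (Fin n) := ⟨i⟩
      rw [hxu i]
      refine ciSup_le fun j => ?_
      have hle := le_iSup_of_finite (fun i => mtStar A i j / d i) i
      have hpos : 0 < ⨆ i, mtStar A i j / d i :=
        (div_pos (zero_lt_one.trans_le (one_le_mtStar_diag hA j)) (hd j)).trans_le
          (le_iSup_of_finite (fun i => mtStar A i j / d i) j)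
      have h : mtStar A i j / d i * u j ≤ 1 :=
        (mul_le_mul hle (hu j).2 (hu0 j) hpos.le).trans (mul_inv_cancel₀ hpos.ne').le
      rwa [div_mul_eq_mul_div, div_le_one (hd i)] at h
end

section
/- Let A be an n×n matrix with nonnegative real entries satisfying Tr(A) ≤ 1, let d ∈ ℝ^n be a positive vector, and let c ∈ ℝ^n be a nonnegative vector with max_{1≤i,j≤n} (A*)_{ij}·c_j/d_i > 1 (i.e. d^− A* c > 1). Then there is no positive vector x ∈ ℝ^n satisfying A⊗x ⊕ c ≤ x ≤ d (entrywise). -/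
/-!
A positive solution `x` of `A ⊗ x ≤ x` satisfies `A^{⊗k} ⊗ x ≤ x` for all `k` by induction
(`mtPow_le_div`), so `(A*) i j ≤ x i / x j`. Together with `c ≤ x ≤ d` this gives
`(A*) i j * c j ≤ x i ≤ d i` for all `i, j`, that is `d^− A* c ≤ 1`.
-/

open scoped BigOperators

/-- A positive `x` with `A ⊗ x ≤ x` dominates every power: `A^{⊗k} i j * x j ≤ x i`, stated
with `x j` divided out. -/
theorem mtPow_le_div {n : ℕ} (A : Matrix (Fin n) (Fin n) ℝ) (hA : ∀ i j, 0 ≤ A i j)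
    (x : Fin n → ℝ) (hx : ∀ i, 0 < x i) (hAx : ∀ i, mtVec A x i ≤ x i) (k : ℕ) (i j : Fin n) :
    mtPow A k i j ≤ x i / x j := by
  induction k generalizing i with
  | zero =>
    simp only [mtPow, Matrix.one_apply]
    split_ifs with h
    · subst h
      exact (div_self (hx i).ne').ge
    · exact (div_pos (hx i) (hx j)).le
  | succ k ih =>
    refine Real.iSup_le (fun l => ?_) (div_pos (hx i) (hx j)).le
    have hl : A i l * x l ≤ x i :=
      (le_ciSup (f := fun l => A i l * x l) (Set.finite_range _).bddAbove l).trans (hAx i)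
    calc A i l * mtPow A k l j ≤ A i l * (x l / x j) := mul_le_mul_of_nonneg_left (ih l) (hA i l)
      _ = A i l * x l / x j := (mul_div_assoc _ _ _).symm
      _ ≤ x i / x j := div_le_div_of_nonneg_right hl (hx j).le

/-- If `Tr(A) ≤ 1` and `d^− A* c > 1`, then no positive vector satisfies
`A ⊗ x ⊕ c ≤ x ≤ d`. -/
theorem max_times_double_ineq_no_solution {n : ℕ} (A : Matrix (Fin n) (Fin n) ℝ)
    (hA : ∀ i j, 0 ≤ A i j) (hTr : mtTr A ≤ 1)
    (d : Fin n → ℝ) (hd : ∀ i, 0 < d i)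
    (c : Fin n → ℝ) (hc : ∀ i, 0 ≤ c i)
    (hcd : 1 < ⨆ i, ⨆ j, mtStar A i j * c j / d i) :
    ¬∃ x : Fin n → ℝ, (∀ i, 0 < x i) ∧
      (∀ i, mtVec A x i ≤ x i) ∧ (∀ i, c i ≤ x i) ∧ ∀ i, x i ≤ d i := by
  rintro ⟨x, hx, hAx, hcx, hxd⟩
  refine hcd.not_ge ?_
  -- `Real.iSup_le` needs a nonnegative bound, which covers the junk value `0` of an empty supremum.
  refine Real.iSup_le (fun i => Real.iSup_le (fun j => ?_) zero_le_one) zero_le_one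
  have hpos : 0 ≤ x i / x j := (div_pos (hx i) (hx j)).le
  have hstar : mtStar A i j ≤ x i / x j :=
    Real.iSup_le (fun k => Real.iSup_le (fun _ => mtPow_le_div A hA x hx hAx k i j) hpos) hpos
  rw [div_le_one (hd i)]
  calc mtStar A i j * c j ≤ x i / x j * c j := mul_le_mul_of_nonneg_right hstar (hc j)
    _ ≤ x i / x j * x j := mul_le_mul_of_nonneg_left (hcx j) hpos
    _ = x i := div_mul_cancel₀ _ (hx j).ne'
    _ ≤ d i := hxd i
end
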